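/- Let α ∈ D and let γ be a monomial with γ ≠ α and α + γ ∈ ⟨𝓕⟩. Then deg(γ) > deg(α), where deg denotes total degree. -/

import Mathlib

open MvPolynomial

/-- Monomials in the variables `σ`, represented by their exponent vectors. -/
abbrev Mon (σ : Type*) := σ →₀ ℕ

/-- A monomial order: a total order on monomials such that `1 ≼ t` for every monomial `t`
and `t ≼ u → t·v ≼ u·v` (written additively on exponent vectors). -/
structure MonOrd (σ : Type*) where
  le : Mon σ → Mon σ → Prop
  le_refl : ∀ t, le t t
  le_trans : ∀ t u v, le t u → le u v → le t v
  le_antisymm : ∀ t u, le t u → le u t → t = u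
  le_total : ∀ t u, le t u ∨ le u t
  zero_le : ∀ t, le 0 t
  add_le_add : ∀ t u v, le t u → le (t + v) (u + v)

/-- Strict version of a monomial order. -/
def MonOrd.lt {σ : Type*} (μ : MonOrd σ) (t u : Mon σ) : Prop := μ.le t u ∧ t ≠ u

/-- The extension of a monomial order (given by the relation `r` on monomials) to polynomials:
`g ≼ f` iff `g = f` or the greatest monomial on which `f` and `g` differ occurs in `f`.
(This is the closed form of the recursive definition: `g ≼ f` iff `g = f`, or
`HT g ≺ HT f`, or `HT g = HT f` and `g - HT g ≼ f - HT f`, with `0` the least polynomial.) -/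
def polyLe {σ : Type*} (r : Mon σ → Mon σ → Prop) (g f : MvPolynomial σ (ZMod 2)) : Prop :=
  g = f ∨ ∃ t, t ∈ f.support ∧ t ∉ g.support ∧
    ∀ u : Mon σ, ((u ∈ f.support ∧ u ∉ g.support) ∨ (u ∈ g.support ∧ u ∉ f.support)) → r u t

/-- Strict extension of a monomial order to polynomials. -/
def polyLt {σ : Type*} (r : Mon σ → Mon σ → Prop) (g f : MvPolynomial σ (ZMod 2)) : Prop :=
  polyLe r g f ∧ g ≠ f

/-- `S_F`: the set of non-residual polynomials with respect to `F` and the monomial order `r`,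
i.e. those `f` admitting a `g` with `f + g ∈ ⟨F⟩` and `g ≺ f`. -/
def SF {σ : Type*} (r : Mon σ → Mon σ → Prop) (F : Set (MvPolynomial σ (ZMod 2))) :
    Set (MvPolynomial σ (ZMod 2)) :=
  {f | ∃ g, f + g ∈ Ideal.span F ∧ polyLt r g f}

/-- `t` is the head monomial (`r`-greatest monomial) of the polynomial `f`. -/
def IsHT {σ : Type*} (r : Mon σ → Mon σ → Prop) (f : MvPolynomial σ (ZMod 2)) (t : Mon σ) :
    Prop :=
  t ∈ f.support ∧ ∀ u ∈ f.support, r u t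

/-- `HT(S)`: the set of head monomials (as polynomials) of the nonzero elements of `S`. -/
def HTset {σ : Type*} (r : Mon σ → Mon σ → Prop) (S : Set (MvPolynomial σ (ZMod 2))) :
    Set (MvPolynomial σ (ZMod 2)) :=
  {p | ∃ f ∈ S, f ≠ 0 ∧ ∃ t, IsHT r f t ∧ p = monomial t 1}

/-- The divisibility (componentwise) order `◁` on monomials. -/
def triMon {σ : Type*} (t u : Mon σ) : Prop := ∀ x, t x ≤ u x

/-- The order `◁` on polynomials: `p ◁ q` iff there is an injective map `φ` from the
monomials of `p` to the monomials of `q` with `t ◁ φ t` for each monomial `t` of `p`. -/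
def triPoly {σ : Type*} (p q : MvPolynomial σ (ZMod 2)) : Prop :=
  ∃ φ : Mon σ → Mon σ, Set.InjOn φ ↑p.support ∧ ∀ t ∈ p.support, φ t ∈ q.support ∧ triMon t (φ t)

/-- Upward closure with respect to `◁`. -/
def upClo {σ : Type*} (A : Set (MvPolynomial σ (ZMod 2))) : Set (MvPolynomial σ (ZMod 2)) :=
  {q | ∃ p ∈ A, triPoly p q}

/-- `Min_◁(A)`: the `◁`-minimal elements of `A`. -/
def minTri {σ : Type*} (A : Set (MvPolynomial σ (ZMod 2))) : Set (MvPolynomial σ (ZMod 2)) :=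
  {p | p ∈ A ∧ ∀ q ∈ A, triPoly q p → q = p}

/-- `G` is a Gröbner basis of the ideal `I` with respect to the monomial order `r`. -/
def IsGB {σ : Type*} (r : Mon σ → Mon σ → Prop) (G : Finset (MvPolynomial σ (ZMod 2)))
    (I : Ideal (MvPolynomial σ (ZMod 2))) : Prop :=
  (↑G : Set (MvPolynomial σ (ZMod 2))) ⊆ ↑I ∧
    Ideal.span (↑G : Set (MvPolynomial σ (ZMod 2))) = I ∧
    Ideal.span (HTset r (↑I : Set (MvPolynomial σ (ZMod 2)))) = Ideal.span (HTset r ↑G)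

/-- `G` is a reduced Gröbner basis of `I` with respect to `r`. -/
def IsReducedGB {σ : Type*} (r : Mon σ → Mon σ → Prop) (G : Finset (MvPolynomial σ (ZMod 2)))
    (I : Ideal (MvPolynomial σ (ZMod 2))) : Prop :=
  IsGB r G I ∧ ∀ f ∈ G, ¬ ∀ t ∈ f.support,
    (monomial t 1 : MvPolynomial σ (ZMod 2)) ∈
      Ideal.span (HTset r ((↑G : Set (MvPolynomial σ (ZMod 2))) \ {f}))

/-- The variable set `X`: the special variables `s, ℓ, c, c̄, b, b̄` together with, for each
`0 ≤ i ≤ n`, the variables `s_i, f_i, q_{ji}, c_{ji}, b_{ji}` (`1 ≤ j ≤ 4`, encoded by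
`j : Fin 4`) and their barred copies (`bar = true`). -/
inductive MVar (n : ℕ) : Type where
  | vs | vl | vc | vcb | vb | vbb
  | vS (bar : Bool) (i : Fin (n+1))
  | vF (bar : Bool) (i : Fin (n+1))
  | vQ (bar : Bool) (j : Fin 4) (i : Fin (n+1))
  | vC (bar : Bool) (j : Fin 4) (i : Fin (n+1))
  | vB (bar : Bool) (j : Fin 4) (i : Fin (n+1))
deriving DecidableEq

open MVar

abbrev MPoly (n : ℕ) := MvPolynomial (MVar n) (ZMod 2)

/-- `e(n) = 2^(2^n)`. -/
def en (n : ℕ) : ℕ := 2 ^ 2 ^ n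

/-- The set `P_0` (barred copy if `bar = true`). -/
def P0 (n : ℕ) (bar : Bool) : Set (MPoly n) :=
  {p | ∃ j : Fin 4, p =
    X (vB bar j 0) ^ 2 * X (vC bar j 0) * X (vF bar 0) + X (vC bar j 0) * X (vS bar 0)}

/-- The set `P_m` for `m = i+1`, `i : Fin n` (barred copy if `bar = true`).
Here `i.succ` plays the role of `m` and `i.castSucc` the role of `m-1`; the indices
`1,2,3,4` of the paper are encoded as `0,1,2,3 : Fin 4`. -/
def Pm (n : ℕ) (bar : Bool) (i : Fin n) : Set (MPoly n) :=
  ({ X (vQ bar 0 i.succ) * X (vC bar 0 i.castSucc) * X (vS bar i.castSucc) + X (vS bar i.succ),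
    X (vQ bar 1 i.succ) * X (vC bar 1 i.castSucc) * X (vS bar i.castSucc)
      + X (vQ bar 0 i.succ) * X (vB bar 0 i.castSucc) * X (vC bar 0 i.castSucc)
        * X (vF bar i.castSucc),
    X (vQ bar 2 i.succ) * X (vC bar 2 i.castSucc) * X (vF bar i.castSucc)
      + X (vQ bar 1 i.succ) * X (vC bar 1 i.castSucc) * X (vF bar i.castSucc),
    X (vQ bar 2 i.succ) * X (vB bar 0 i.castSucc) * X (vC bar 2 i.castSucc)
        * X (vS bar i.castSucc)
      + X (vQ bar 1 i.succ) * X (vB bar 3 i.castSucc) * X (vC bar 1 i.castSucc)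
        * X (vS bar i.castSucc),
    X (vQ bar 3 i.succ) * X (vB bar 3 i.castSucc) * X (vC bar 3 i.castSucc)
        * X (vF bar i.castSucc)
      + X (vQ bar 2 i.succ) * X (vC bar 2 i.castSucc) * X (vS bar i.castSucc),
    X (vQ bar 3 i.succ) * X (vC bar 3 i.castSucc) * X (vS bar i.castSucc)
      + X (vF bar i.succ) } : Set (MPoly n))
  ∪ {p | ∃ j : Fin 4, p =
      X (vQ bar 1 i.succ) * X (vB bar 2 i.castSucc) * X (vB bar j i.succ) * X (vC bar j i.succ)
          * X (vF bar i.castSucc)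
        + X (vQ bar 1 i.succ) * X (vB bar 1 i.castSucc) * X (vC bar j i.succ)
          * X (vF bar i.castSucc)}

/-- The set `P = P_0 ∪ P_1 ∪ ⋯ ∪ P_n`; for `bar = true` this is the barred copy `P̄`
(the image of `P` under the substitution replacing each variable by its barred version). -/
def PP (n : ℕ) (bar : Bool) : Set (MPoly n) := P0 n bar ∪ ⋃ i : Fin n, Pm n bar i

/-- The set `G` of seven extra binomials. -/
def GG (n : ℕ) : Set (MPoly n) :=
  { X (vB false 3 (Fin.last n)) * X vl * X vb + X vl * X vc,
    X (vB false 3 (Fin.last n)) * X vl * X vbb + X vl * X vcb,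
    X (vC false 3 (Fin.last n)) * X (vF false (Fin.last n)) + X vl,
    X (vC true 3 (Fin.last n)) * X (vF true (Fin.last n))
      + X (vC false 3 (Fin.last n)) * X (vS false (Fin.last n)),
    X (vB true 3 (Fin.last n)) * X (vC false 3 (Fin.last n)) * X (vS false (Fin.last n))
      + X (vC false 3 (Fin.last n)) * X (vS false (Fin.last n)) * X vb,
    X (vB true 3 (Fin.last n)) * X (vC false 3 (Fin.last n)) * X (vS false (Fin.last n))
      + X (vC false 3 (Fin.last n)) * X (vS false (Fin.last n)) * X vbb,
    X (vC true 3 (Fin.last n)) * X (vS true (Fin.last n)) + X vs }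

/-- The set `𝓕 = P ∪ P̄ ∪ G`. -/
def FF (n : ℕ) : Set (MPoly n) := PP n false ∪ PP n true ∪ GG n

/-- The set `C = {ℓ c̄^{m1} c^{m2} : m1 + m2 = e(n)}` of monomials. -/
def Cmon (n : ℕ) : Set (Mon (MVar n)) :=
  {α | ∃ m1 m2 : ℕ, m1 + m2 = en n ∧
    α = Finsupp.single vl 1 + Finsupp.single vcb m1 + Finsupp.single vc m2}

/-- The set `D = {ℓ^j c̄^{m1} c^{m2} : j ∈ {0,1}, j + m1 + m2 ≤ e(n)}` of monomials. -/
def Dmon (n : ℕ) : Set (Mon (MVar n)) :=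
  {α | ∃ j m1 m2 : ℕ, j ≤ 1 ∧ j + m1 + m2 ≤ en n ∧
    α = Finsupp.single vl j + Finsupp.single vcb m1 + Finsupp.single vc m2}

/-- An injective rank function on the variables realizing the variable ordering
(from least to greatest): `s, c, c̄, ℓ, b, b̄`; then `s_0,…,s_n`; `f_0,…,f_n`;
`c_{10},…,c_{1n}; …; c_{40},…,c_{4n}`; `b_{10},…,b_{4n}`; `q_{10},…,q_{4n}`;
then the barred variables in the same pattern. -/
def vrank (n : ℕ) : MVar n → ℕ
  | .vs => 0
  | .vc => 1
  | .vcb => 2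
  | .vl => 3
  | .vb => 4
  | .vbb => 5
  | .vS bar i => 6 + (cond bar (14 * (n+1)) 0) + (i : ℕ)
  | .vF bar i => 6 + (cond bar (14 * (n+1)) 0) + (n+1) + (i : ℕ)
  | .vC bar j i => 6 + (cond bar (14 * (n+1)) 0) + 2*(n+1) + (j : ℕ)*(n+1) + (i : ℕ)
  | .vB bar j i => 6 + (cond bar (14 * (n+1)) 0) + 6*(n+1) + (j : ℕ)*(n+1) + (i : ℕ)
  | .vQ bar j i => 6 + (cond bar (14 * (n+1)) 0) + 10*(n+1) + (j : ℕ)*(n+1) + (i : ℕ)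

/-- The lexicographic monomial order on `X`: `t ≼_lex u` iff `t = u` or the exponents differ
somewhere and at the greatest variable (w.r.t. `vrank`) where they differ, the exponent of
`t` is smaller. -/
def lexLe (n : ℕ) (t u : Mon (MVar n)) : Prop :=
  t = u ∨ ∃ x : MVar n, t x < u x ∧ ∀ y : MVar n, vrank n x < vrank n y → t y = u y

/-- The total degree of a monomial. -/
def mdeg {σ : Type*} (t : Mon σ) : ℕ := t.sum fun _ k => k

/-- The degree lexicographic monomial order. -/
def degLexLe (n : ℕ) (t u : Mon (MVar n)) : Prop :=
  mdeg t < mdeg u ∨ (mdeg t = mdeg u ∧ lexLe n t u)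

/-- Weighted degree of a monomial with respect to a weight map `w`. -/
noncomputable def wdeg {n : ℕ} (w : MVar n → ℝ) (t : Mon (MVar n)) : ℝ :=
  t.sum fun x k => (k : ℝ) * w x

/-- The weighted monomial order determined by the weight map `w`. -/
def wLe {n : ℕ} (w : MVar n → ℝ) (t u : Mon (MVar n)) : Prop := t = u ∨ wdeg w t < wdeg w u

/-! Each binomial of `𝓕` is a rule that replaces one monomial by another, so whether a monomial
belongs to a set of monomials saturated under these rules depends only on its class modulo `⟨𝓕⟩`.
No rule applies to `c̄^{m₁} c^{m₂}`, which is therefore alone in its class.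

The rules of `P` are those of a machine of level `n` which adds `e(n) = e(n-1)^2` to its active
counter by two nested loops, each of them controlled by a machine of level `n - 1`. The final value
of the active counter is constant along every computation, in both directions. Hence the monomials
of the computation of the unbarred machine that ends with `b_{4n}^{m₁+m₂} b̄^{m₁} b^{m₂}` form a
saturated set. As `m₁ + m₂ < e(n)`, this computation cannot be followed back to the start of the
machine, and so it never meets the rules of `G` other than those on `ℓ`. These rules say
`ℓ = c_{4n} f_n`, `c = b_{4n} b` and `c̄ = b_{4n} b̄`; after this substitution, `γ` belongs to the
computation of `α = ℓ c̄^{m₁} c^{m₂}`. So `b` and `c` together occur `m₂` times in `γ`, and `b̄` and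
`c̄` together `m₁` times. If the machine is still running, `γ` also contains some `c_{4n} q_{an}`;
otherwise `γ` arises from `α` by substitutions, each of which raises the degree. -/

/-- The syntactic congruence of a set `S` in a commutative monoid: `u` and `v` are congruent if no
context tells them apart with respect to membership in `S`. -/
def syntacticAddCon {M : Type*} [AddCommMonoid M] (S : Set M) : AddCon M where
  r u v := ∀ w, w + u ∈ S ↔ w + v ∈ S
  iseqv := ⟨fun _ _ ↦ Iff.rfl, fun h w ↦ (h w).symm, fun h h' w ↦ (h w).trans (h' w)⟩
  add' h h' w := by
    rw [← add_assoc, h', add_right_comm, h, add_right_comm, add_assoc]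

theorem syntacticAddCon_of_forall_notMem {M : Type*} [AddCommMonoid M] {S : Set M} {u v : M}
    (hu : ∀ w, w + u ∉ S) (hv : ∀ w, w + v ∉ S) : syntacticAddCon S u v :=
  fun w ↦ iff_of_false (hu w) (hv w)

theorem mem_iff_mem_of_syntacticAddCon {M : Type*} [AddCommMonoid M] {S : Set M} {u v : M}
    (h : syntacticAddCon S u v) : u ∈ S ↔ v ∈ S := by
  simpa using h 0

theorem addCon_of_sub_mem_span {σ R : Type*} [CommRing R] [Nontrivial R] (c : AddCon (σ →₀ ℕ))
    {F : Set (MvPolynomial σ R)} (hF : ∀ p ∈ F, ∃ u v, c u v ∧ p = monomial u 1 - monomial v 1)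
    {α γ : σ →₀ ℕ} (h : monomial α 1 - monomial γ 1 ∈ Ideal.span F) : c α γ := by
  let φ : MvPolynomial σ R →+* AddMonoidAlgebra R c.Quotient :=
    AddMonoidAlgebra.mapDomainRingHom R c.mk'
  have hφ (u) : φ (monomial u 1) = AddMonoidAlgebra.single (u : c.Quotient) 1 :=
    AddMonoidAlgebra.mapDomain_single
  have hker : Ideal.span F ≤ RingHom.ker φ := by
    refine Ideal.span_le.2 fun p hp ↦ ?_
    obtain ⟨u, v, huv, rfl⟩ := hF p hp
    rw [SetLike.mem_coe, RingHom.mem_ker, map_sub, hφ, hφ, (AddCon.eq c).2 huv, sub_self]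
  have h0 := RingHom.mem_ker.1 (hker h)
  rw [map_sub, hφ, hφ, sub_eq_zero, AddMonoidAlgebra.single_left_inj one_ne_zero] at h0
  exact (AddCon.eq c).1 h0

/-! ### The binomials as replacement rules -/

variable {n : ℕ}

/-- The state variable of level `k`: `s_k` for `fin = false` and `f_k` for `fin = true`. -/
def state (bar fin : Bool) (k : Fin (n + 1)) : MVar n :=
  if fin then vF bar k else vS bar k

/-- The monomial `c_{ak} s_k` or `c_{ak} f_k`: the level `k` machine with active counter `a` is
about to start, or has finished. -/
noncomputable def token (bar : Bool) (k : Fin (n + 1)) (a : Fin 4) (fin : Bool) : Mon (MVar n) :=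
  .single (vC bar a k) 1 + .single (state bar fin k) 1

/-- The monomial `q_{a,i+1} s_i` or `q_{a,i+1} f_i`: the machine of level `i + 1` is in phase `a`,
and the machine of level `i` that it calls is about to start, or has finished. -/
noncomputable def call (bar : Bool) (i : Fin n) (a : Fin 4) (fin : Bool) : Mon (MVar n) :=
  .single (vQ bar a i.succ) 1 + .single (state bar fin i.castSucc) 1

/-- The monomial `q_{a,i+1} c_{ai} s_i` or `q_{a,i+1} c_{ai} f_i`: in phase `a`, the machine of
level `i` is called on its own counter `a`. -/
noncomputable def phase (bar : Bool) (i : Fin n) (a : Fin 4) (fin : Bool) : Mon (MVar n) :=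
  .single (vC bar a i.castSucc) 1 + call bar i a fin

/-- The replacement rules given by the binomials of `P_0`. -/
inductive BaseRule (bar : Bool) : Mon (MVar n) → Mon (MVar n) → Prop
  | loop (a) : BaseRule bar (.single (vB bar a 0) 2 + token bar 0 a true) (token bar 0 a false)

/-- The replacement rules given by the binomials of `P_{i+1}`, in the order of the paper. -/
inductive LevelRule (bar : Bool) (i : Fin n) : Mon (MVar n) → Mon (MVar n) → Prop
  | start : LevelRule bar i (phase bar i 0 false) (.single (state bar false i.succ) 1)
  | enterLoop : LevelRule bar i (phase bar i 1 false)
      (.single (vB bar 0 i.castSucc) 1 + phase bar i 0 true)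
  | moved : LevelRule bar i (phase bar i 2 true) (phase bar i 1 true)
  | repeatLoop : LevelRule bar i (.single (vB bar 0 i.castSucc) 1 + phase bar i 2 false)
      (.single (vB bar 3 i.castSucc) 1 + phase bar i 1 false)
  | exitLoop : LevelRule bar i (.single (vB bar 3 i.castSucc) 1 + phase bar i 3 true)
      (phase bar i 2 false)
  | finish : LevelRule bar i (phase bar i 3 false) (.single (state bar true i.succ) 1)
  | move (a) : LevelRule bar i
      (.single (vB bar 2 i.castSucc) 1 + .single (vB bar a i.succ) 1 + .single (vC bar a i.succ) 1
        + call bar i 1 true)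
      (.single (vB bar 1 i.castSucc) 1 + .single (vC bar a i.succ) 1 + call bar i 1 true)

/-- The replacement rules given by the binomials of `P`. -/
inductive MachineRule (bar : Bool) : Mon (MVar n) → Mon (MVar n) → Prop
  | base {u v} (h : BaseRule bar u v) : MachineRule bar u v
  | level (i) {u v} (h : LevelRule bar i u v) : MachineRule bar u v

/-- The replacement rules given by the binomials of `G`. -/
inductive TopRule : Mon (MVar n) → Mon (MVar n) → Prop
  | countC : TopRule (.single (vB false 3 (.last n)) 1 + .single vl 1 + .single vb 1)
      (.single vl 1 + .single vc 1)
  | countCbar : TopRule (.single (vB false 3 (.last n)) 1 + .single vl 1 + .single vbb 1)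
      (.single vl 1 + .single vcb 1)
  | leave : TopRule (token false (.last n) 3 true) (.single vl 1)
  | switch : TopRule (token true (.last n) 3 true) (token false (.last n) 3 false)
  | moveB : TopRule (.single (vB true 3 (.last n)) 1 + token false (.last n) 3 false)
      (token false (.last n) 3 false + .single vb 1)
  | moveBbar : TopRule (.single (vB true 3 (.last n)) 1 + token false (.last n) 3 false)
      (token false (.last n) 3 false + .single vbb 1)
  | accept : TopRule (token true (.last n) 3 false) (.single vs 1)

/-- The replacement rules given by the binomials of `𝓕`. -/
inductive Rule : Mon (MVar n) → Mon (MVar n) → Prop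
  | machine (bar) {u v} (h : MachineRule bar u v) : Rule u v
  | top {u v} (h : TopRule u v) : Rule u v

theorem monomial_add_one {σ R : Type*} [CommSemiring R] (u v : σ →₀ ℕ) :
    monomial (u + v) (1 : R) = monomial u 1 * monomial v 1 := by
  rw [monomial_mul, one_mul]

theorem exists_baseRule_of_mem_P0 {bar : Bool} {p : MPoly n} (hp : p ∈ P0 n bar) :
    ∃ u v, BaseRule bar u v ∧ p = monomial u 1 + monomial v 1 := by
  obtain ⟨a, rfl⟩ := hp
  refine ⟨_, _, .loop a, ?_⟩
  simp only [token, state, monomial_add_one, ← X_pow_eq_monomial, if_true, Bool.false_eq_true,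
    if_false]
  ring

theorem exists_levelRule_of_mem_Pm {bar : Bool} {i : Fin n} {p : MPoly n} (hp : p ∈ Pm n bar i) :
    ∃ u v, LevelRule bar i u v ∧ p = monomial u 1 + monomial v 1 := by
  rcases hp with (rfl | rfl | rfl | rfl | rfl | rfl) | ⟨a, rfl⟩
  on_goal 1 => refine ⟨_, _, .start, ?_⟩
  on_goal 2 => refine ⟨_, _, .enterLoop, ?_⟩
  on_goal 3 => refine ⟨_, _, .moved, ?_⟩
  on_goal 4 => refine ⟨_, _, .repeatLoop, ?_⟩
  on_goal 5 => refine ⟨_, _, .exitLoop, ?_⟩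
  on_goal 6 => refine ⟨_, _, .finish, ?_⟩
  on_goal 7 => refine ⟨_, _, .move a, ?_⟩
  all_goals
    simp only [phase, call, state, monomial_add_one, ← X_pow_eq_monomial, if_true,
      Bool.false_eq_true, if_false]
    ring

theorem exists_machineRule_of_mem_PP {bar : Bool} {p : MPoly n} (hp : p ∈ PP n bar) :
    ∃ u v, MachineRule bar u v ∧ p = monomial u 1 + monomial v 1 := by
  rcases hp with hp | hp
  · obtain ⟨u, v, h, rfl⟩ := exists_baseRule_of_mem_P0 hp
    exact ⟨u, v, .base h, rfl⟩
  · obtain ⟨i, hp⟩ := Set.mem_iUnion.1 hp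
    obtain ⟨u, v, h, rfl⟩ := exists_levelRule_of_mem_Pm hp
    exact ⟨u, v, .level i h, rfl⟩

theorem exists_topRule_of_mem_GG {p : MPoly n} (hp : p ∈ GG n) :
    ∃ u v, TopRule u v ∧ p = monomial u 1 + monomial v 1 := by
  rcases hp with rfl | rfl | rfl | rfl | rfl | rfl | rfl
  on_goal 1 => refine ⟨_, _, .countC, ?_⟩
  on_goal 2 => refine ⟨_, _, .countCbar, ?_⟩
  on_goal 3 => refine ⟨_, _, .leave, ?_⟩
  on_goal 4 => refine ⟨_, _, .switch, ?_⟩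
  on_goal 5 => refine ⟨_, _, .moveB, ?_⟩
  on_goal 6 => refine ⟨_, _, .moveBbar, ?_⟩
  on_goal 7 => refine ⟨_, _, .accept, ?_⟩
  all_goals
    simp only [token, state, monomial_add_one, ← X_pow_eq_monomial, if_true, Bool.false_eq_true,
      if_false]
    ring

theorem exists_rule_of_mem_FF {p : MPoly n} (hp : p ∈ FF n) :
    ∃ u v, Rule u v ∧ p = monomial u 1 + monomial v 1 := by
  rcases hp with (hp | hp) | hp
  · obtain ⟨u, v, h, rfl⟩ := exists_machineRule_of_mem_PP hp
    exact ⟨u, v, .machine false h, rfl⟩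
  · obtain ⟨u, v, h, rfl⟩ := exists_machineRule_of_mem_PP hp
    exact ⟨u, v, .machine true h, rfl⟩
  · obtain ⟨u, v, h, rfl⟩ := exists_topRule_of_mem_GG hp
    exact ⟨u, v, .top h, rfl⟩

/-! ### Configurations of the counter machines -/

/-- The level of an unbarred variable of `V_i` is `i`; the barred and the special variables are put
above all of them, at level `n + 1`. -/
def MVar.level : MVar n → ℕ
  | vS false i | vF false i | vQ false _ i | vC false _ i | vB false _ i => i
  | _ => n + 1

/-- No variable of `t` has its level in `L`. -/
def EmptyOn (t : Mon (MVar n)) (L : Set ℕ) : Prop := ∀ x : MVar n, x.level ∈ L → t x = 0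

/-- The exponents of `b_{1k}, …, b_{4k}`. -/
def bExp (t : Mon (MVar n)) (k : Fin (n + 1)) : Fin 4 → ℕ := fun a ↦ t (vB false a k)

/-- The exponents of the control variables of level `k`, that is, of `c_{ak}`, of `q_{ak}`, and of
`s_k` and `f_k`. -/
def controlExp (t : Mon (MVar n)) (k : Fin (n + 1)) : (Fin 4 → ℕ) × (Fin 4 → ℕ) × (Bool → ℕ) :=
  (fun a ↦ t (vC false a k), fun a ↦ t (vQ false a k), fun fin ↦ t (state false fin k))

/-- What the machine of level `k` will still add to the exponent of its active `b_{ak}`: all of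
`e(k)` before it starts, nothing once it has finished. -/
def load (e : ℕ) (fin : Bool) : ℕ := if fin then 0 else e

@[simp]
theorem emptyOn_add {t u : Mon (MVar n)} {L : Set ℕ} :
    EmptyOn (t + u) L ↔ EmptyOn t L ∧ EmptyOn u L := by
  simp only [EmptyOn, Finsupp.add_apply, add_eq_zero, ← forall_and]

@[simp]
theorem emptyOn_single {x : MVar n} {L : Set ℕ} {e : ℕ} :
    EmptyOn (.single x e) L ↔ e = 0 ∨ x.level ∉ L := by
  refine ⟨fun h ↦ ?_, fun h y hy ↦ ?_⟩
  · by_contra! h'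
    exact h'.1 (by simpa using h x h'.2)
  · rcases h with rfl | h
    · simp
    · exact Finsupp.single_eq_of_ne (by rintro rfl; exact h hy)

@[simp]
theorem level_state (fin : Bool) (k : Fin (n + 1)) : (state false fin k).level = k := by
  cases fin <;> rfl

@[simp]
theorem level_vQ (a : Fin 4) (k : Fin (n + 1)) : (vQ false a k).level = k := rfl

@[simp]
theorem level_vC (a : Fin 4) (k : Fin (n + 1)) : (vC false a k).level = k := rfl

@[simp]
theorem level_vB (a : Fin 4) (k : Fin (n + 1)) : (vB false a k).level = k := rfl

theorem EmptyOn.controlExp_eq_zero {t : Mon (MVar n)} {L : Set ℕ} {k : Fin (n + 1)}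
    (h : EmptyOn t L) (hk : (k : ℕ) ∈ L) : controlExp t k = 0 := by
  simp only [controlExp, Prod.ext_iff, funext_iff]
  exact ⟨fun a ↦ h (vC false a k) hk, fun a ↦ h (vQ false a k) hk,
    fun fin ↦ h _ (level_state fin k ▸ hk)⟩

theorem EmptyOn.bExp_eq_zero {t : Mon (MVar n)} {L : Set ℕ} {k : Fin (n + 1)}
    (h : EmptyOn t L) (hk : (k : ℕ) ∈ L) : bExp t k = 0 :=
  funext fun a ↦ h (vB false a k) hk

theorem emptyOn_Iio_succ {t : Mon (MVar n)} {k : Fin (n + 1)} :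
    EmptyOn t (Set.Iio (k + 1)) ↔ EmptyOn t (Set.Iio k) ∧ controlExp t k = 0 ∧ bExp t k = 0 := by
  constructor
  · have hk : (k : ℕ) ∈ Set.Iio (k + 1 : ℕ) := k.val.lt_succ_self
    exact fun h ↦ ⟨fun x hx ↦ h x (Nat.lt_succ_of_lt hx), h.controlExp_eq_zero hk,
      h.bExp_eq_zero hk⟩
  · rintro ⟨h, hc, hb⟩ x hx
    rcases (Nat.lt_succ_iff.1 hx).lt_or_eq with hx | hx
    · exact h x hx
    simp only [controlExp, Prod.ext_iff, funext_iff] at hc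
    have hk := k.is_lt
    have eq_of_level {i : Fin (n + 1)} (hi : (i : ℕ) = k) : i = k := Fin.ext hi
    rcases x with _ | _ | _ | _ | _ | _ | ⟨_ | _, i⟩ | ⟨_ | _, i⟩ | ⟨_ | _, a, i⟩ | ⟨_ | _, a, i⟩ |
      ⟨_ | _, a, i⟩ <;> first | (exfalso; exact hk.ne' hx) | obtain rfl := eq_of_level hx
    · exact hc.2.2 false
    · exact hc.2.2 true
    · exact hc.2.1 a
    · exact hc.1 a
    · exact congrFun hb a

@[simp]
theorem controlExp_add (t u : Mon (MVar n)) (k : Fin (n + 1)) :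
    controlExp (t + u) k = controlExp t k + controlExp u k := rfl

@[simp]
theorem bExp_add (t u : Mon (MVar n)) (k : Fin (n + 1)) :
    bExp (t + u) k = bExp t k + bExp u k := rfl

@[simp]
theorem controlExp_vC (a : Fin 4) (k : Fin (n + 1)) :
    controlExp (.single (vC false a k) 1) k = (Pi.single a 1, 0, 0) := by
  ext b <;> simp [controlExp, Finsupp.single_apply, Pi.single_apply, eq_comm, state, apply_ite]

@[simp]
theorem controlExp_vQ (a : Fin 4) (k : Fin (n + 1)) :
    controlExp (.single (vQ false a k) 1) k = (0, Pi.single a 1, 0) := by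
  ext b <;> simp [controlExp, Finsupp.single_apply, Pi.single_apply, eq_comm, state, apply_ite]

@[simp]
theorem controlExp_vB (a : Fin 4) (k k' : Fin (n + 1)) (e : ℕ) :
    controlExp (.single (vB false a k') e) k = 0 := by
  ext b <;> simp [controlExp, state, apply_ite]

@[simp]
theorem controlExp_state (fin : Bool) (k : Fin (n + 1)) :
    controlExp (.single (state false fin k) 1) k = (0, 0, Pi.single fin 1) := by
  ext b
  · cases fin <;> simp [controlExp, state]
  · cases fin <;> simp [controlExp, state]
  · cases fin <;> cases b <;> simp [controlExp, state]

@[simp]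
theorem bExp_vB (a : Fin 4) (k : Fin (n + 1)) (e : ℕ) :
    bExp (.single (vB false a k) e) k = Pi.single a e := by
  ext b; simp [bExp, Finsupp.single_apply, Pi.single_apply, eq_comm]

theorem controlExp_single_of_level_ne {x : MVar n} {k : Fin (n + 1)} {e : ℕ} (h : x.level ≠ k) :
    controlExp (.single x e) k = 0 :=
  (emptyOn_single.2 (.inr h)).controlExp_eq_zero (Set.mem_singleton _)

theorem bExp_single_of_level_ne {x : MVar n} {k : Fin (n + 1)} {e : ℕ} (h : x.level ≠ k) :
    bExp (.single x e) k = 0 :=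
  (emptyOn_single.2 (.inr h)).bExp_eq_zero (Set.mem_singleton _)

@[simp]
theorem controlExp_vQ_succ_castSucc (a : Fin 4) (i : Fin n) :
    controlExp (.single (vQ false a i.succ) 1) i.castSucc = 0 :=
  controlExp_single_of_level_ne (by simp)

@[simp]
theorem controlExp_vC_succ_castSucc (a : Fin 4) (i : Fin n) :
    controlExp (.single (vC false a i.succ) 1) i.castSucc = 0 :=
  controlExp_single_of_level_ne (by simp)

@[simp]
theorem controlExp_vC_castSucc_succ (a : Fin 4) (i : Fin n) :
    controlExp (.single (vC false a i.castSucc) 1) i.succ = 0 :=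
  controlExp_single_of_level_ne (by simp)

@[simp]
theorem controlExp_state_castSucc_succ (fin : Bool) (i : Fin n) :
    controlExp (.single (state false fin i.castSucc) 1) i.succ = 0 :=
  controlExp_single_of_level_ne (by simp)

@[simp]
theorem bExp_vB_castSucc_succ (a : Fin 4) (i : Fin n) :
    bExp (.single (vB false a i.castSucc) 1) i.succ = 0 :=
  bExp_single_of_level_ne (by simp)

@[simp]
theorem bExp_vB_succ_castSucc (a : Fin 4) (i : Fin n) :
    bExp (.single (vB false a i.succ) 1) i.castSucc = 0 :=
  bExp_single_of_level_ne (by simp)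

@[simp]
theorem bExp_state (fin : Bool) (k k' : Fin (n + 1)) (e : ℕ) :
    bExp (.single (state false fin k') e) k = 0 := by
  cases fin <;> ext b <;> simp [bExp, state]

@[simp]
theorem bExp_vC (a : Fin 4) (k k' : Fin (n + 1)) (e : ℕ) :
    bExp (.single (vC false a k') e) k = 0 := by
  ext b; simp [bExp]

@[simp]
theorem bExp_vQ (a : Fin 4) (k k' : Fin (n + 1)) (e : ℕ) :
    bExp (.single (vQ false a k') e) k = 0 := by
  ext b; simp [bExp]

/-- The monomial `t` describes, as far as levels `≤ k` are concerned, a machine of level `k` that is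
about to start or has finished, with active counter `j`; `x` are the exponents of
`b_{1k}, …, b_{4k}` once it has finished. -/
def AtRest (t : Mon (MVar n)) (k : Fin (n + 1)) (j : Fin 4) (x : Fin 4 → ℕ) : Prop :=
  EmptyOn t (Set.Iio k) ∧ ∃ fin, controlExp t k = (Pi.single j 1, 0, Pi.single fin 1) ∧
    x = bExp t k + Pi.single j (load (en k) fin)

/-- The machine of level `i + 1`, in phase `a`, still has to do `c` iterations of its inner loop,
where `y` are the exponents of `b_{1i}, …, b_{4i}` once the machine of level `i` it calls has
finished, and `e = e(i)`. The pair `b_{1i}, b_{4i}` counts the passes of the outer loop, the pair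
`b_{2i}, b_{3i}` those of the inner one. -/
def Remaining (e : ℕ) (a : Fin 4) (y : Fin 4 → ℕ) (c : ℕ) : Prop :=
  (if a = 0 ∨ a = 3 then y 0 + y 3 = e ∧ y 1 = 0 ∧ y 2 = 0 else y 1 + y 2 = e ∧ y 0 + y 3 + 1 = e) ∧
    c = e * y 0 + y 1

/-- The monomial `t` describes, as far as levels `≤ k` are concerned, a configuration of the machine
of level `k` with active counter `j`; `x` are the exponents of `b_{1k}, …, b_{4k}` once it has
finished. The machine is either at rest or has called the machine of the level below. -/
inductive Config (t : Mon (MVar n)) : Fin (n + 1) → Fin 4 → (Fin 4 → ℕ) → Prop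
  | atRest {k j x} (h : AtRest t k j x) : Config t k j x
  | running {i : Fin n} {j a : Fin 4} {y : Fin 4 → ℕ} {c : ℕ}
      (hc : controlExp t i.succ = (Pi.single j 1, Pi.single a 1, 0))
      (h : Config t i.castSucc a y) (hy : Remaining (en i) a y c) :
      Config t i.succ j (bExp t i.succ + Pi.single j c)

theorem config_succ_iff {t : Mon (MVar n)} {i : Fin n} {j : Fin 4} {x : Fin 4 → ℕ} :
    Config t i.succ j x ↔ AtRest t i.succ j x ∨ ∃ a y c,
      controlExp t i.succ = (Pi.single j 1, Pi.single a 1, 0) ∧ Config t i.castSucc a y ∧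
        Remaining (en i) a y c ∧ x = bExp t i.succ + Pi.single j c := by
  constructor
  · intro h
    generalize hk : i.succ = k at h
    cases h with
    | atRest h => exact .inl (hk ▸ h)
    | running hc h hy =>
      obtain rfl := Fin.succ_injective _ hk
      exact .inr ⟨_, _, _, hc, h, hy, rfl⟩
  · rintro (h | ⟨a, y, c, hc, h, hy, rfl⟩)
    · exact .atRest h
    · exact .running hc h hy

theorem config_iff_atRest {t : Mon (MVar n)} {k : Fin (n + 1)} {j : Fin 4} {x : Fin 4 → ℕ}
    {fin : Bool} (ht : t (state false fin k) ≠ 0) : Config t k j x ↔ AtRest t k j x := by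
  refine ⟨fun h ↦ ?_, .atRest⟩
  cases h with
  | atRest h => exact h
  | running hc => exact absurd (congrFun (congrArg (·.2.2) hc) fin) ht

theorem add_single_one_eq_single_one {ι : Type*} [DecidableEq ι] {f : ι → ℕ} {a b : ι} :
    f + Pi.single a 1 = Pi.single b 1 ↔ f = 0 ∧ a = b := by
  constructor
  · intro h
    have hab : a = b := by
      by_contra hab
      simpa [hab] using congrFun h a
    subst hab
    exact ⟨by simpa using h, rfl⟩
  · rintro ⟨rfl, rfl⟩
    exact zero_add _

theorem atRest_add_state {w : Mon (MVar n)} {k : Fin (n + 1)} {fin : Bool} {j : Fin 4}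
    {x : Fin 4 → ℕ} :
    AtRest (w + .single (state false fin k) 1) k j x ↔ EmptyOn w (Set.Iio k) ∧
      controlExp w k = (Pi.single j 1, 0, 0) ∧ x = bExp w k + Pi.single j (load (en k) fin) := by
  have hc (fin') : controlExp (w + .single (state false fin k) 1) k =
      (Pi.single j 1, 0, Pi.single fin' 1) ↔
        controlExp w k = (Pi.single j 1, 0, 0) ∧ fin = fin' := by
    simp [Prod.ext_iff, add_single_one_eq_single_one, and_assoc]
  simp [AtRest, hc, and_assoc, -Bool.exists_bool, -controlExp_add]

theorem config_add_state {w : Mon (MVar n)} {k : Fin (n + 1)} {fin : Bool} {j : Fin 4}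
    {x : Fin 4 → ℕ} :
    Config (w + .single (state false fin k) 1) k j x ↔ EmptyOn w (Set.Iio k) ∧
      controlExp w k = (Pi.single j 1, 0, 0) ∧ x = bExp w k + Pi.single j (load (en k) fin) := by
  rw [config_iff_atRest (fin := fin) (by simp), atRest_add_state]

theorem not_atRest_of_apply_ne_zero {t : Mon (MVar n)} {k : Fin (n + 1)} {j : Fin 4}
    {x : Fin 4 → ℕ} {z : MVar n} (hz : z.level < k) (ht : t z ≠ 0) : ¬ AtRest t k j x :=
  fun h ↦ ht (h.1 z hz)

theorem config_add_call {w : Mon (MVar n)} {i : Fin n} {a j : Fin 4} {fin : Bool}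
    {x : Fin 4 → ℕ} :
    Config (w + call false i a fin) i.succ j x ↔
      EmptyOn w (Set.Iio i.castSucc) ∧ controlExp w i.castSucc = (Pi.single a 1, 0, 0) ∧
        controlExp w i.succ = (Pi.single j 1, 0, 0) ∧ ∃ c,
          Remaining (en i) a (bExp w i.castSucc + Pi.single a (load (en i) fin)) c ∧
          x = bExp w i.succ + Pi.single j c := by
  have not_atRest : ¬ AtRest (w + call false i a fin) i.succ j x :=
    not_atRest_of_apply_ne_zero (z := state false fin i.castSucc) (by simp) (by simp [call])
  have hc (a') : controlExp (w + call false i a fin) i.succ = (Pi.single j 1, Pi.single a' 1, 0) ↔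
      controlExp w i.succ = (Pi.single j 1, 0, 0) ∧ a = a' := by
    simp [call, Prod.ext_iff, add_single_one_eq_single_one, and_comm, and_left_comm]
  have hlow (y) : Config (w + call false i a fin) i.castSucc a y ↔
      EmptyOn w (Set.Iio i.castSucc) ∧ controlExp w i.castSucc = (Pi.single a 1, 0, 0) ∧
        y = bExp w i.castSucc + Pi.single a (load (en i) fin) := by
    simp [call, ← add_assoc, config_add_state]
  have hb : bExp (w + call false i a fin) i.succ = bExp w i.succ := by simp [call]
  rw [config_succ_iff, or_iff_right not_atRest]
  simp only [hc, hb]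
  constructor
  · rintro ⟨a, y, c, ⟨hw, rfl⟩, hy, hrem, rfl⟩
    obtain ⟨he, hcs, rfl⟩ := (hlow y).1 hy
    exact ⟨he, hcs, hw, c, hrem, rfl⟩
  · rintro ⟨he, hcs, hw, c, hrem, rfl⟩
    exact ⟨a, _, c, ⟨hw, rfl⟩, (hlow _).2 ⟨he, hcs, rfl⟩, hrem, rfl⟩

theorem config_add_phase {w : Mon (MVar n)} {i : Fin n} {a j : Fin 4} {fin : Bool}
    {x : Fin 4 → ℕ} :
    Config (w + phase false i a fin) i.succ j x ↔
      EmptyOn w (Set.Iio i.castSucc) ∧ controlExp w i.castSucc = 0 ∧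
        controlExp w i.succ = (Pi.single j 1, 0, 0) ∧ ∃ c,
          Remaining (en i) a (bExp w i.castSucc + Pi.single a (load (en i) fin)) c ∧
          x = bExp w i.succ + Pi.single j c := by
  simp [phase, ← add_assoc, config_add_call, Prod.ext_iff]

theorem en_succ (k : ℕ) : en (k + 1) = en k * en k := by
  rw [en, pow_succ, mul_two, pow_add]; rfl

section Remaining

variable {e c : ℕ} {y : Fin 4 → ℕ}

theorem remaining_start : Remaining e 0 (y + Pi.single 0 e) c ↔ y = 0 ∧ c = e * e := by
  simp only [Remaining, Fin.reduceEq, or_false, ↓reduceIte, Pi.add_apply, Pi.single_eq_same, ne_eq,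
    not_false_eq_true, Pi.single_eq_of_ne, add_zero, one_ne_zero, funext_iff, Pi.zero_apply,
    Fin.forall_fin_succ, Fin.succ_zero_eq_one, Fin.succ_one_eq_two, Fin.reduceSucc,
    IsEmpty.forall_iff, and_true]
  constructor
  · rintro ⟨⟨h, h1, h2⟩, rfl⟩
    obtain ⟨h0, h3⟩ : y 0 = 0 ∧ y 3 = 0 := by omega
    simp [h0, h1, h2, h3]
  · rintro ⟨⟨h0, h1, h2, h3⟩, rfl⟩
    simp [h0, h1, h2, h3]

theorem remaining_enterLoop :
    Remaining e 1 (y + Pi.single 1 e) c ↔ Remaining e 0 (y + Pi.single 0 1) c := by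
  simp only [Remaining, one_ne_zero, Fin.reduceEq, or_self, ↓reduceIte, Pi.add_apply,
    Pi.single_eq_same, ne_eq, not_false_eq_true, Pi.single_eq_of_ne, add_zero, zero_ne_one,
    or_false, mul_add, mul_one]
  omega

theorem remaining_moved : Remaining e 2 y c ↔ Remaining e 1 y c := .rfl

theorem remaining_repeatLoop :
    Remaining e 2 (y + Pi.single 0 1 + Pi.single 2 e) c ↔
      Remaining e 1 (y + Pi.single 3 1 + Pi.single 1 e) c := by
  simp only [Remaining, Fin.reduceEq, or_self, ↓reduceIte, Pi.add_apply, ne_eq, one_ne_zero,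
    not_false_eq_true, Pi.single_eq_of_ne, add_zero, Pi.single_eq_same, mul_add, mul_one,
    zero_ne_one]
  omega

theorem remaining_exitLoop :
    Remaining e 3 (y + Pi.single 3 1) c ↔ Remaining e 2 (y + Pi.single 2 e) c := by
  simp only [Remaining, Fin.reduceEq, or_true, ↓reduceIte, Pi.add_apply, ne_eq, not_false_eq_true,
    Pi.single_eq_of_ne, add_zero, Pi.single_eq_same, or_self, and_congr_left_iff]
  omega

theorem remaining_finish : Remaining e 3 (y + Pi.single 3 e) c ↔ y = 0 ∧ c = 0 := by
  simp only [Remaining, Fin.reduceEq, or_true, ↓reduceIte, Pi.add_apply, ne_eq, not_false_eq_true,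
    Pi.single_eq_of_ne, add_zero, Pi.single_eq_same, funext_iff, Pi.zero_apply,
    Fin.forall_fin_succ, Fin.succ_zero_eq_one, Fin.succ_one_eq_two, Fin.reduceSucc,
    IsEmpty.forall_iff, and_true]
  constructor
  · rintro ⟨⟨h, h1, h2⟩, rfl⟩
    obtain ⟨h0, h3⟩ : y 0 = 0 ∧ y 3 = 0 := by omega
    simp [h0, h1, h2, h3]
  · rintro ⟨⟨h0, h1, h2, h3⟩, rfl⟩
    simp [h0, h1, h2, h3]

theorem remaining_move :
    Remaining e 1 (y + Pi.single 2 1) c ↔ Remaining e 1 (y + Pi.single 1 1) (c + 1) := by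
  simp only [Remaining, one_ne_zero, Fin.reduceEq, or_self, ↓reduceIte, Pi.add_apply, ne_eq,
    not_false_eq_true, Pi.single_eq_of_ne, add_zero, Pi.single_eq_same, zero_ne_one]
  omega

theorem exists_remaining_move {x z : Fin 4 → ℕ} {j : Fin 4} :
    (∃ c, Remaining e 1 (y + Pi.single 2 1) c ∧ x = z + Pi.single j 1 + Pi.single j c) ↔
      ∃ c, Remaining e 1 (y + Pi.single 1 1) c ∧ x = z + Pi.single j c := by
  have hz (c) : z + Pi.single j 1 + Pi.single j c = z + Pi.single j (c + 1) := by
    rw [add_assoc, ← Pi.single_add, add_comm 1]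
  simp only [hz, remaining_move]
  refine ⟨fun ⟨c, h⟩ ↦ ⟨c + 1, h⟩, fun ⟨c, h, hx⟩ ↦ ?_⟩
  cases c with
  | zero => simp [Remaining] at h
  | succ c => exact ⟨c, h, hx⟩

end Remaining

theorem config_add_state_succ {w : Mon (MVar n)} {i : Fin n} {fin : Bool} {j : Fin 4}
    {x : Fin 4 → ℕ} :
    Config (w + .single (state false fin i.succ) 1) i.succ j x ↔
      EmptyOn w (Set.Iio i.castSucc) ∧ controlExp w i.castSucc = 0 ∧
        controlExp w i.succ = (Pi.single j 1, 0, 0) ∧ bExp w i.castSucc = 0 ∧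
        x = bExp w i.succ + Pi.single j (load (en i * en i) fin) := by
  rw [config_add_state, Fin.val_succ, ← Fin.val_castSucc, emptyOn_Iio_succ, Fin.val_castSucc,
    en_succ]
  tauto

theorem syntacticAddCon_levelRule {i : Fin n} {u v : Mon (MVar n)} (h : LevelRule false i u v)
    (j : Fin 4) (x : Fin 4 → ℕ) : syntacticAddCon {t | Config t i.succ j x} u v := by
  intro w
  cases h with
  | start =>
    simp [config_add_phase, config_add_state_succ, load, remaining_start, and_assoc]
  | enterLoop => simp [← add_assoc, config_add_phase, load, remaining_enterLoop]
  | moved => simp [config_add_phase, load, remaining_moved]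
  | repeatLoop => simp [← add_assoc, config_add_phase, load, remaining_repeatLoop]
  | exitLoop => simp [← add_assoc, config_add_phase, load, remaining_exitLoop]
  | finish =>
    simp [config_add_phase, config_add_state_succ, load, remaining_finish, and_assoc]
  | move a =>
    suffices EmptyOn w (Set.Iio i) → controlExp w i.castSucc = (Pi.single 1 1, 0, 0) →
        controlExp w i.succ + (Pi.single a 1, 0, 0) = (Pi.single j 1, 0, 0) →
        ((∃ c, Remaining (en i) 1 (bExp w i.castSucc + Pi.single 2 1) c ∧
            x = bExp w i.succ + Pi.single a 1 + Pi.single j c) ↔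
          ∃ c, Remaining (en i) 1 (bExp w i.castSucc + Pi.single 1 1) c ∧
            x = bExp w i.succ + Pi.single j c) by
      simpa [← add_assoc, config_add_call, load] using this
    intro _ _ hw
    obtain ⟨-, rfl⟩ := add_single_one_eq_single_one.1 (congrArg Prod.fst hw)
    exact exists_remaining_move

theorem syntacticAddCon_baseRule {u v : Mon (MVar n)} (h : BaseRule false u v)
    (j : Fin 4) (x : Fin 4 → ℕ) : syntacticAddCon {t | Config t 0 j x} u v := by
  intro w
  obtain ⟨a⟩ := h
  suffices EmptyOn w (Set.Iio 0) → controlExp w 0 + (Pi.single a 1, 0, 0) = (Pi.single j 1, 0, 0) →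
      (x = bExp w 0 + Pi.single a 2 ↔ x = bExp w 0 + Pi.single j (en 0)) by
    simpa [token, ← add_assoc, config_add_state, load] using this
  intro _ hw
  obtain ⟨-, rfl⟩ := add_single_one_eq_single_one.1 (congrArg Prod.fst hw)
  rfl

theorem EmptyOn.not_atRest_add {t w : Mon (MVar n)} {k : Fin (n + 1)} {m : ℕ}
    (h : EmptyOn t (Set.Ioi m)) (ht : t ≠ 0) (hm : m < k) {j : Fin 4} {x : Fin 4 → ℕ} :
    ¬ AtRest (w + t) k j x := by
  obtain ⟨z, hz⟩ := Finsupp.ne_iff.1 ht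
  have hzm : z.level ≤ m := by
    by_contra! hzm
    exact hz (h z hzm)
  exact not_atRest_of_apply_ne_zero (hzm.trans_lt hm) (by simp_all)

theorem syntacticAddCon_config_of_le {k k' : Fin (n + 1)} (hk : k ≤ k') {u v : Mon (MVar n)}
    (hu : EmptyOn u (Set.Ioi k)) (hv : EmptyOn v (Set.Ioi k)) (hu0 : u ≠ 0) (hv0 : v ≠ 0)
    (h : ∀ j x, syntacticAddCon {t | Config t k j x} u v) (j : Fin 4) (x : Fin 4 → ℕ) :
    syntacticAddCon {t | Config t k' j x} u v := by
  induction k' using Fin.induction generalizing j x with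
  | zero => exact Fin.le_zero_iff.1 hk ▸ h j x
  | succ i ih =>
    rcases hk.eq_or_lt with rfl | hk
    · exact h j x
    intro w
    have hw (a y) := ih (Fin.le_castSucc_iff.2 hk) a y w
    simp only [Set.mem_ofPred_eq] at hw ⊢
    simp [config_succ_iff, hu.not_atRest_add hu0 hk, hv.not_atRest_add hv0 hk, hw,
      hu.controlExp_eq_zero hk, hv.controlExp_eq_zero hk, hu.bExp_eq_zero hk, hv.bExp_eq_zero hk]

/-! ### The run that ends with given counters -/

/-- A state variable `s_k` or `f_k` of the unbarred machine (`bar = false`) or of the barred machine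
(`bar = true`) occurs in `t`. -/
def HasState (bar : Bool) (t : Mon (MVar n)) : Prop := ∃ fin k, t (state bar fin k) ≠ 0

@[simp]
theorem hasState_add {bar : Bool} {t u : Mon (MVar n)} :
    HasState bar (t + u) ↔ HasState bar t ∨ HasState bar u := by
  simp only [HasState, Finsupp.add_apply, ne_eq, add_eq_zero, not_and_or, exists_or]

@[simp]
theorem hasState_single_state (bar fin : Bool) (k : Fin (n + 1)) :
    HasState bar (.single (state bar fin k) 1) := ⟨fin, k, by simp⟩

theorem hasState_token (bar fin : Bool) (k : Fin (n + 1)) (a : Fin 4) :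
    HasState bar (token bar k a fin) := by simp [token]

theorem hasState_call (bar fin : Bool) (i : Fin n) (a : Fin 4) :
    HasState bar (call bar i a fin) := by simp [call]

theorem hasState_phase (bar fin : Bool) (i : Fin n) (a : Fin 4) :
    HasState bar (phase bar i a fin) := by simp [phase, hasState_call]

theorem HasState.ne_zero {bar : Bool} {t : Mon (MVar n)} (h : HasState bar t) : t ≠ 0 := by
  rintro rfl
  obtain ⟨_, _, h⟩ := h
  exact h rfl

namespace MachineRule

variable {bar : Bool} {u v : Mon (MVar n)}

theorem hasState (h : MachineRule bar u v) : HasState bar u ∧ HasState bar v := by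
  rcases h with ⟨⟨_⟩⟩ | ⟨i, h⟩
  · simp [hasState_token]
  · cases h <;> simp [hasState_phase, hasState_call]

theorem syntacticAddCon_config (h : MachineRule false u v) (j : Fin 4) (x : Fin 4 → ℕ) :
    syntacticAddCon {t | Config t (.last n) j x} u v := by
  have hu := h.hasState.1.ne_zero
  have hv := h.hasState.2.ne_zero
  rcases h with h | ⟨i, h⟩
  · have hlevel : EmptyOn u (Set.Ioi 0) ∧ EmptyOn v (Set.Ioi 0) := by
      cases h
      simp [token]
    exact syntacticAddCon_config_of_le (Fin.le_last _) hlevel.1 hlevel.2 hu hv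
      (syntacticAddCon_baseRule h) j x
  · have hlevel : EmptyOn u (Set.Ioi i.succ) ∧ EmptyOn v (Set.Ioi i.succ) := by
      cases h <;> simp [phase, call]
    exact syntacticAddCon_config_of_le (Fin.le_last _) hlevel.1 hlevel.2 hu hv
      (syntacticAddCon_levelRule h) j x

theorem emptyOn_Ioi (h : MachineRule false u v) :
    EmptyOn u (Set.Ioi n) ∧ EmptyOn v (Set.Ioi n) := by
  rcases h with ⟨⟨_⟩⟩ | ⟨i, h⟩
  · simp [token]
  · cases h <;> simp [phase, call, i.is_le']

end MachineRule

/-- The substitution that undoes the effect of `G` on the unbarred machine: it replaces `ℓ` by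
`c_{4n} f_n`, `c` by `b_{4n} b` and `c̄` by `b_{4n} b̄`. -/
noncomputable def unwind : Mon (MVar n) →+ Mon (MVar n) :=
  Finsupp.liftAddHom fun x ↦ multiplesHom _ <| match x with
    | vl => token false (.last n) 3 true
    | vc => .single (vB false 3 (.last n)) 1 + .single vb 1
    | vcb => .single (vB false 3 (.last n)) 1 + .single vbb 1
    | x => .single x 1

theorem unwind_add_eq (t : Mon (MVar n)) :
    unwind t + (.single vl (t vl) + .single vc (t vc) + .single vcb (t vcb)) =
      t + (t vl • token false (.last n) 3 true +
        t vc • (.single (vB false 3 (.last n)) 1 + .single vb 1) +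
        t vcb • (.single (vB false 3 (.last n)) 1 + .single vbb 1)) := by
  induction t using Finsupp.induction_linear with
  | zero => simp
  | add t u ht hu =>
    have h := congrArg₂ (· + ·) ht hu
    simp only [map_add, Finsupp.add_apply, Finsupp.single_add, add_smul] at h ⊢
    convert h using 1 <;> abel
  | single x k => cases x <;> simp [unwind, add_comm]

theorem unwind_eq_self {t : Mon (MVar n)} (hl : t vl = 0) (hc : t vc = 0) (hcb : t vcb = 0) :
    unwind t = t := by
  simpa [hl, hc, hcb] using unwind_add_eq t

@[simp]
theorem unwind_vl : unwind (.single (vl : MVar n) 1) = token false (.last n) 3 true := by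
  simp [unwind]

@[simp]
theorem unwind_vc (e : ℕ) : unwind (.single (vc : MVar n) e) =
    .single (vB false 3 (.last n)) e + .single vb e := by
  simp [unwind]

@[simp]
theorem unwind_vcb (e : ℕ) : unwind (.single (vcb : MVar n) e) =
    .single (vB false 3 (.last n)) e + .single vbb e := by
  simp [unwind]

@[simp]
theorem unwind_state (bar fin : Bool) (k : Fin (n + 1)) :
    unwind (.single (state bar fin k) 1) = .single (state bar fin k) 1 :=
  unwind_eq_self (by cases fin <;> simp [state]) (by cases fin <;> simp [state])
    (by cases fin <;> simp [state])

@[simp]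
theorem unwind_token (bar fin : Bool) (k : Fin (n + 1)) (a : Fin 4) :
    unwind (token bar k a fin) = token bar k a fin := by
  rw [token, map_add, unwind_state, unwind_eq_self] <;> simp

@[simp]
theorem unwind_call (bar fin : Bool) (i : Fin n) (a : Fin 4) :
    unwind (call bar i a fin) = call bar i a fin := by
  rw [call, map_add, unwind_state, unwind_eq_self] <;> simp

@[simp]
theorem unwind_phase (bar fin : Bool) (i : Fin n) (a : Fin 4) :
    unwind (phase bar i a fin) = phase bar i a fin := by
  rw [phase, map_add, unwind_call, unwind_eq_self] <;> simp

theorem MachineRule.unwind_eq_self {bar : Bool} {u v : Mon (MVar n)} (h : MachineRule bar u v) :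
    unwind u = u ∧ unwind v = v := by
  rcases h with ⟨⟨_⟩⟩ | ⟨i, h⟩
  · simp [_root_.unwind_eq_self]
  · cases h <;> simp [_root_.unwind_eq_self]

/-- The monomials describing a configuration of the unbarred machine of level `n` with active
counter `4` that finishes with `b_{4n}^{m₁+m₂} b̄^{m₁} b^{m₂}`. -/
def Run (n m₁ m₂ : ℕ) : Set (Mon (MVar n)) :=
  {t | (∀ x : MVar n, n < x.level → t x = (.single vbb m₁ + .single vb m₂ : Mon (MVar n)) x) ∧
    Config t (.last n) 3 (Pi.single 3 (m₁ + m₂))}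

section Run

variable {m₁ m₂ : ℕ} {u v w : Mon (MVar n)}

theorem add_notMem_run_of_hasState (hu : HasState true u) : w + u ∉ Run n m₁ m₂ := by
  obtain ⟨fin, k, hk⟩ := hu
  intro h
  have := h.1 (state true fin k) (by cases fin <;> exact n.lt_succ_self)
  cases fin <;> simp_all [state]

theorem add_notMem_run_of_apply_vs_ne_zero (hu : u vs ≠ 0) : w + u ∉ Run n m₁ m₂ := by
  intro h
  have := h.1 vs n.lt_succ_self
  simp_all

theorem add_token_notMem_run (hm : m₁ + m₂ < en n) :
    w + token false (.last n) 3 false ∉ Run n m₁ m₂ := by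
  rintro ⟨-, h⟩
  rw [token, ← add_assoc, config_add_state] at h
  have := congrFun h.2.2 3
  simp only [Pi.single_eq_same, bExp_add, bExp_vC, add_zero, load, Bool.false_eq_true, ↓reduceIte,
    Fin.val_last, Pi.add_apply] at this
  omega

theorem syntacticAddCon_run_of_emptyOn (hu : EmptyOn u (Set.Ioi n)) (hv : EmptyOn v (Set.Ioi n))
    (h : ∀ j x, syntacticAddCon {t | Config t (.last n) j x} u v) :
    syntacticAddCon (Run n m₁ m₂) u v := by
  intro w
  refine and_congr (forall₂_congr fun x hx ↦ ?_) (h _ _ w)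
  simp [hu x hx, hv x hx]

theorem syntacticAddCon_run_of_machineRule {bar : Bool} (h : MachineRule bar u v) :
    syntacticAddCon (Run n m₁ m₂) u v := by
  cases bar with
  | false =>
    exact syntacticAddCon_run_of_emptyOn h.emptyOn_Ioi.1 h.emptyOn_Ioi.2 h.syntacticAddCon_config
  | true =>
    exact syntacticAddCon_of_forall_notMem (fun _ ↦ add_notMem_run_of_hasState h.hasState.1)
      (fun _ ↦ add_notMem_run_of_hasState h.hasState.2)

theorem syntacticAddCon_run_of_topRule (hm : m₁ + m₂ < en n) (h : TopRule u v) :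
    syntacticAddCon (Run n m₁ m₂) (unwind u) (unwind v) := by
  have of_eq {u v : Mon (MVar n)} (h : u = v) : syntacticAddCon (Run n m₁ m₂) u v :=
    h ▸ (syntacticAddCon _).refl u
  have not_start (u w : Mon (MVar n)) : w + (u + token false (.last n) 3 false) ∉ Run n m₁ m₂ :=
    add_assoc w u _ ▸ add_token_notMem_run hm
  cases h with
  | countC => exact of_eq (by simp [unwind_eq_self, add_comm, add_left_comm])
  | countCbar => exact of_eq (by simp [unwind_eq_self, add_comm, add_left_comm])
  | leave => exact of_eq (by simp)
  | switch =>
    rw [unwind_token, unwind_token]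
    exact syntacticAddCon_of_forall_notMem
      (fun _ ↦ add_notMem_run_of_hasState (hasState_token _ _ _ _))
      (fun _ ↦ add_token_notMem_run hm)
  | moveB =>
    rw [add_comm (token _ _ _ _), unwind.map_add, unwind.map_add, unwind_token]
    exact syntacticAddCon_of_forall_notMem (not_start _) (not_start _)
  | moveBbar =>
    rw [add_comm (token _ _ _ _), unwind.map_add, unwind.map_add, unwind_token]
    exact syntacticAddCon_of_forall_notMem (not_start _) (not_start _)
  | accept =>
    rw [unwind_token, unwind_eq_self (t := .single vs 1) (by simp) (by simp) (by simp)]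
    exact syntacticAddCon_of_forall_notMem
      (fun _ ↦ add_notMem_run_of_hasState (hasState_token _ _ _ _))
      (fun _ ↦ add_notMem_run_of_apply_vs_ne_zero (by simp))

theorem syntacticAddCon_run_of_rule (hm : m₁ + m₂ < en n) (h : Rule u v) :
    syntacticAddCon (Run n m₁ m₂) (unwind u) (unwind v) := by
  rcases h with ⟨bar, h⟩ | h
  · rw [h.unwind_eq_self.1, h.unwind_eq_self.2]
    exact syntacticAddCon_run_of_machineRule h
  · exact syntacticAddCon_run_of_topRule hm h

theorem unwind_mem_run (m₁ m₂ : ℕ) :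
    unwind (.single vl 1 + .single vcb m₁ + .single vc m₂) ∈ Run n m₁ m₂ := by
  have hα : unwind (.single vl 1 + .single vcb m₁ + .single vc m₂) =
      .single vbb m₁ + .single vb m₂ + .single (vB false 3 (.last n)) (m₁ + m₂) +
        .single (vC false 3 (.last n)) 1 + .single (state false true (.last n)) 1 := by
    simp only [map_add, unwind_vl, unwind_vcb, unwind_vc, token, Finsupp.single_add]
    abel
  rw [hα]
  refine ⟨fun x hx ↦ ?_, ?_⟩
  · have hlow {y : MVar n} {e : ℕ} (hy : y.level ≤ n) : Finsupp.single y e x = 0 :=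
      Finsupp.single_eq_of_ne (by rintro rfl; omega)
    simp only [Finsupp.add_apply]
    rw [hlow (y := vB _ _ _) le_rfl, hlow (y := vC _ _ _) le_rfl,
      hlow (y := state _ _ _) le_rfl]
    rfl
  · have hvbb : n < (vbb : MVar n).level := n.lt_succ_self
    have hvb : n < (vb : MVar n).level := n.lt_succ_self
    rw [config_add_state]
    simp [controlExp_single_of_level_ne (k := .last n) hvbb.ne',
      controlExp_single_of_level_ne (k := .last n) hvb.ne',
      bExp_single_of_level_ne (k := .last n) hvbb.ne',
      bExp_single_of_level_ne (k := .last n) hvb.ne', hvbb.le, hvb.le, load, Pi.single_add]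

theorem Config.running_or_finished {k : Fin (n + 1)} {j : Fin 4} {x : Fin 4 → ℕ}
    (h : Config u k j x) (hx : x j < en k) : u (vC false j k) = 1 ∧
      ((u (vF false k) = 0 ∧ ∃ a, u (vQ false a k) = 1) ∨
        (u (vF false k) = 1 ∧ u (vB false j k) = x j)) := by
  cases h with
  | atRest h =>
    obtain ⟨-, fin, hc, rfl⟩ := h
    simp only [controlExp, Prod.ext_iff, funext_iff] at hc
    cases fin with
    | false => simp [load] at hx
    | true =>
      exact ⟨by simpa using hc.1 j, .inr ⟨by simpa [state] using hc.2.2 true, by simp [load, bExp]⟩⟩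
  | @running i j a y c hc h hy =>
    simp only [controlExp, Prod.ext_iff, funext_iff] at hc
    exact ⟨by simpa using hc.1 j, .inl ⟨hc.2.2 true, _, by simpa using hc.2.1 a⟩⟩

theorem sum_le_mdeg {σ : Type*} (t : Mon σ) (s : Finset σ) : ∑ x ∈ s, t x ≤ mdeg t :=
  Finset.sum_le_sum_of_ne_zero fun _ _ h ↦ Finsupp.mem_support_iff.2 h

theorem eq_of_le_of_mdeg_le {σ : Type*} {s t : Mon σ} (h : s ≤ t) (hdeg : mdeg t ≤ mdeg s) :
    s = t := by
  obtain ⟨d, rfl⟩ := exists_add_of_le h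
  change (s + d).degree ≤ s.degree at hdeg
  have hd : d.degree = 0 := by simpa using hdeg
  rw [(Finsupp.degree_eq_zero_iff d).1 hd, add_zero]

theorem apply_eq_of_unwind_mem_run (hm : m₁ + m₂ < en n) (hu : unwind u ∈ Run n m₁ m₂)
    (hdeg : mdeg u ≤ 1 + m₁ + m₂) : u vl = 1 ∧ u vcb = m₁ ∧ u vc = m₂ := by
  obtain ⟨htop, hconf⟩ := hu
  obtain ⟨hC, hQF⟩ := hconf.running_or_finished (by simpa using hm)
  have h (x) := DFunLike.congr_fun (unwind_add_eq u) x
  have hvbb : u vbb + u vcb = m₁ := by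
    simpa [token, state, htop vbb n.lt_succ_self] using (h vbb).symm
  have hvb : u vb + u vc = m₂ := by
    simpa [token, state, htop vb n.lt_succ_self] using (h vb).symm
  have hC : u (vC false 3 (.last n)) + u vl = 1 := by
    simpa [token, state, hC] using (h (vC false 3 (.last n))).symm
  rcases hQF with ⟨hF, a, hQ⟩ | ⟨hF, hB⟩
  · have hF : u (vF false (.last n)) + u vl = 0 := by
      simpa [token, state, hF] using (h (vF false (.last n))).symm
    have hQ : u (vQ false a (.last n)) = 1 := by
      simpa [token, state, hQ] using (h (vQ false a (.last n))).symm
    have := sum_le_mdeg u {vc, vcb, vb, vbb, vC false 3 (.last n), vQ false a (.last n)}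
    simp only [Finset.mem_insert, reduceCtorEq, Finset.mem_singleton, or_self,
      not_false_eq_true, Finset.sum_insert, Finset.sum_singleton] at this
    omega
  · have hF : u (vF false (.last n)) + u vl = 1 := by
      simpa [token, state, hF] using (h (vF false (.last n))).symm
    have hB : u (vB false 3 (.last n)) + (u vc + u vcb) = m₁ + m₂ := by
      simpa [token, state, hB, add_assoc] using (h (vB false 3 (.last n))).symm
    have := sum_le_mdeg u {vl, vc, vcb, vb, vbb, vC false 3 (.last n), vF false (.last n),
      vB false 3 (.last n)}
    simp only [Finset.mem_insert, reduceCtorEq, Finset.mem_singleton, or_self,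
      not_false_eq_true, Finset.sum_insert, Finset.sum_singleton] at this
    omega

theorem mdeg_lt_of_unwind_mem_run (hm : m₁ + m₂ < en n) (hu : unwind u ∈ Run n m₁ m₂)
    (hne : u ≠ .single vl 1 + .single vcb m₁ + .single vc m₂) :
    mdeg (.single vl 1 + .single vcb m₁ + .single vc m₂ : Mon (MVar n)) < mdeg u := by
  by_contra! hdeg
  have hα : mdeg (.single vl 1 + .single vcb m₁ + .single vc m₂ : Mon (MVar n)) = 1 + m₁ + m₂ := by
    change Finsupp.degree _ = _
    simp
  obtain ⟨hl, hcb, hc⟩ := apply_eq_of_unwind_mem_run hm hu (hdeg.trans_eq hα)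
  refine hne (eq_of_le_of_mdeg_le (fun x ↦ ?_) hdeg).symm
  cases x <;> simp [hl, hcb, hc]

end Run

theorem HasState.not_le_vcb_add_vc {bar : Bool} {t : Mon (MVar n)} (h : HasState bar t)
    (m₁ m₂ : ℕ) : ¬ t ≤ .single vcb m₁ + .single vc m₂ := by
  obtain ⟨fin, k, hk⟩ := h
  intro hle
  have := hle (state bar fin k)
  cases fin <;> simp_all [state]

theorem Rule.not_le_vcb_add_vc {u v : Mon (MVar n)} (h : Rule u v) (m₁ m₂ : ℕ) :
    ¬ u ≤ .single vcb m₁ + .single vc m₂ ∧ ¬ v ≤ .single vcb m₁ + .single vc m₂ := by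
  have of_vl {t : Mon (MVar n)} (ht : t vl ≠ 0) : ¬ t ≤ .single vcb m₁ + .single vc m₂ :=
    fun hle ↦ ht (by simpa using hle vl)
  have of_vs {t : Mon (MVar n)} (ht : t vs ≠ 0) : ¬ t ≤ .single vcb m₁ + .single vc m₂ :=
    fun hle ↦ ht (by simpa using hle vs)
  rcases h with ⟨bar, h⟩ | h
  · exact ⟨h.hasState.1.not_le_vcb_add_vc m₁ m₂, h.hasState.2.not_le_vcb_add_vc m₁ m₂⟩
  have of_token (t : Mon (MVar n)) (bar fin : Bool) :
      ¬ t + token bar (.last n) 3 fin ≤ .single vcb m₁ + .single vc m₂ :=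
    (hasState_add.2 (.inr (hasState_token ..))).not_le_vcb_add_vc m₁ m₂
  cases h with
  | countC => exact ⟨of_vl (by simp), of_vl (by simp)⟩
  | countCbar => exact ⟨of_vl (by simp), of_vl (by simp)⟩
  | leave => exact ⟨zero_add (token ..) ▸ of_token _ _ _, of_vl (by simp)⟩
  | switch => exact ⟨zero_add (token ..) ▸ of_token _ _ _, zero_add (token ..) ▸ of_token _ _ _⟩
  | moveB => exact ⟨of_token _ _ _, add_comm _ (token ..) ▸ of_token _ _ _⟩
  | moveBbar => exact ⟨of_token _ _ _, add_comm _ (token ..) ▸ of_token _ _ _⟩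
  | accept => exact ⟨zero_add (token ..) ▸ of_token _ _ _, of_vs (by simp)⟩

theorem addCon_of_add_mem_span_FF (c : AddCon (Mon (MVar n))) (hc : ∀ {u v}, Rule u v → c u v)
    {α γ : Mon (MVar n)} (h : (monomial α 1 + monomial γ 1 : MPoly n) ∈ Ideal.span (FF n)) :
    c α γ := by
  rw [← CharTwo.sub_eq_add] at h
  refine addCon_of_sub_mem_span c (F := FF n) (fun p hp ↦ ?_) h
  obtain ⟨u, v, huv, rfl⟩ := exists_rule_of_mem_FF hp
  exact ⟨u, v, hc huv, (CharTwo.sub_eq_add _ _).symm⟩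

theorem eq_vcb_add_vc_of_add_mem_span_FF {m₁ m₂ : ℕ} {γ : Mon (MVar n)}
    (h : (monomial (.single vcb m₁ + .single vc m₂) 1 + monomial γ 1 : MPoly n) ∈
      Ideal.span (FF n)) :
    γ = .single vcb m₁ + .single vc m₂ := by
  have hc := addCon_of_add_mem_span_FF (syntacticAddCon {.single vcb m₁ + .single vc m₂})
    (fun h ↦ syntacticAddCon_of_forall_notMem
      (fun w hw ↦ (h.not_le_vcb_add_vc m₁ m₂).1 (le_add_self.trans_eq hw))
      (fun w hw ↦ (h.not_le_vcb_add_vc m₁ m₂).2 (le_add_self.trans_eq hw))) h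
  exact (mem_iff_mem_of_syntacticAddCon hc).1 rfl

theorem unwind_mem_run_of_add_mem_span_FF {m₁ m₂ : ℕ} (hm : m₁ + m₂ < en n) {γ : Mon (MVar n)}
    (h : (monomial (.single vl 1 + .single vcb m₁ + .single vc m₂) 1 + monomial γ 1 : MPoly n) ∈
      Ideal.span (FF n)) :
    unwind γ ∈ Run n m₁ m₂ :=
  (mem_iff_mem_of_syntacticAddCon (addCon_of_add_mem_span_FF
    ((syntacticAddCon (Run n m₁ m₂)).comap unwind (map_add unwind))
    (syntacticAddCon_run_of_rule hm) h)).1 (unwind_mem_run m₁ m₂)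

open MVar in
/-- For `α ∈ D` and any monomial `γ ≠ α` with `α + γ ∈ ⟨𝓕⟩`, the total
degree of `γ` exceeds that of `α`. -/
theorem stmt14 (n : ℕ) (α : Mon (MVar n)) (hα : α ∈ Dmon n) (γ : Mon (MVar n)) (hne : γ ≠ α)
    (h : (monomial α 1 + monomial γ 1 : MPoly n) ∈ Ideal.span (FF n)) :
    mdeg α < mdeg γ := by
  obtain ⟨j, m₁, m₂, hj, hm, rfl⟩ := hα
  interval_cases j
  · rw [Finsupp.single_zero, zero_add] at h hne
    exact absurd (eq_vcb_add_vc_of_add_mem_span_FF h) hne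
  · have hlt : m₁ + m₂ < en n := by omega
    exact mdeg_lt_of_unwind_mem_run hlt (unwind_mem_run_of_add_mem_span_FF hlt h) hne
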